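/- Let V be a finite set and f : 2^V → ℝ normalized, monotone and submodular with curvature bound k_f ∈ [0,1] (f(V) − f(V \ {v}) ≥ (1 − k_f)·f({v}) for every v ∈ V). Then for all disjoint Y, Z ⊆ V, f(Z ∪ Y) − f(Z) ≥ (1 − k_f) · f(Y). -/

import Mathlib

/-!
By submodularity, adding `v` to a set outside `v` gains at most `f {v}` and at least
`f V - f (V \ {v})`. Adding the elements of `Y` one at a time, first to `∅` and then to `Z`, gives
`(1 - k) f Y ≤ ∑ v ∈ Y, (1 - k) f {v} ≤ ∑ v ∈ Y, (f V - f (V \ {v})) ≤ f (Z ∪ Y) - f Z`.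
-/

/-- Submodularity of a function on a lattice; a submodular set function is the case
`α = Finset V`. -/
def IsSubmodular {α M : Type*} [Lattice α] [Add M] [LE M] (f : α → M) : Prop :=
  ∀ a b, f (a ⊔ b) + f (a ⊓ b) ≤ f a + f b

/-- `k` is a curvature bound for the set function `f` restricted to the subsets of the finite
ground set `S`. The ground set is explicit so that the ambient type may be infinite. -/
def IsCurvatureBound {V R M : Type*} [DecidableEq V] [Ring R] [AddCommGroup M] [Module R M] [LE M]
    (f : Finset V → M) (S : Finset V) (k : R) : Prop :=
  ∀ v ∈ S, (1 - k) • f {v} ≤ f S - f (S \ {v})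

namespace IsSubmodular

variable {M : Type*} [AddCommGroup M] [PartialOrder M] [IsOrderedAddMonoid M]

theorem map_sup_sub_le_map_sup_sub {α : Type*} [Lattice α] [IsModularLattice α] {f : α → M}
    (hf : IsSubmodular f) {a b c : α} (hab : a ≤ b) (hbc : b ⊓ c ≤ a) :
    f (b ⊔ c) - f b ≤ f (a ⊔ c) - f a := by
  have hsup : a ⊔ c ⊔ b = b ⊔ c := by rw [sup_right_comm, sup_eq_right.2 hab]
  have hinf : (a ⊔ c) ⊓ b = a := by
    rw [sup_inf_assoc_of_le c hab, inf_comm, sup_eq_left.2 hbc]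
  rw [sub_le_sub_iff]
  simpa only [hsup, hinf] using hf (a ⊔ c) b

variable {V : Type*} [DecidableEq V] {f : Finset V → M}

theorem map_union_sub_le_sum (hf : IsSubmodular f) (Y Z : Finset V) :
    f (Z ∪ Y) - f Z ≤ ∑ v ∈ Y, (f (Z ∪ {v}) - f Z) := by
  induction Y using Finset.induction_on with
  | empty => simp
  | insert v Y hv ih =>
    have hgain : f (Z ∪ Y ∪ {v}) - f (Z ∪ Y) ≤ f (Z ∪ {v}) - f Z :=
      hf.map_sup_sub_le_map_sup_sub Finset.subset_union_left (by grind)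
    calc f (Z ∪ insert v Y) - f Z
        = (f (Z ∪ Y ∪ {v}) - f (Z ∪ Y)) + (f (Z ∪ Y) - f Z) := by
          rw [sub_add_sub_cancel, Finset.union_assoc, Finset.union_comm Y, Finset.insert_eq]
      _ ≤ (f (Z ∪ {v}) - f Z) + ∑ w ∈ Y, (f (Z ∪ {w}) - f Z) := add_le_add hgain ih
      _ = ∑ w ∈ insert v Y, (f (Z ∪ {w}) - f Z) := by rw [Finset.sum_insert hv]

theorem map_le_sum_map_singleton (hf : IsSubmodular f) (hf₀ : f ∅ = 0) (Y : Finset V) :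
    f Y ≤ ∑ v ∈ Y, f {v} := by
  simpa [hf₀] using hf.map_union_sub_le_sum Y ∅

theorem sum_map_sub_map_sdiff_singleton_le (hf : IsSubmodular f) {S Y Z : Finset V} (hY : Y ⊆ S)
    (hZ : Z ⊆ S) (hYZ : Disjoint Y Z) :
    ∑ v ∈ Y, (f S - f (S \ {v})) ≤ f (Z ∪ Y) - f Z := by
  induction Y using Finset.induction_on with
  | empty => simp
  | insert v Y hv ih =>
    obtain ⟨hvS, hYS⟩ := Finset.insert_subset_iff.1 hY
    obtain ⟨hvZ, hYZ⟩ := Finset.disjoint_insert_left.1 hYZ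
    have hgain : f (S \ {v} ∪ {v}) - f (S \ {v}) ≤ f (Z ∪ Y ∪ {v}) - f (Z ∪ Y) :=
      hf.map_sup_sub_le_map_sup_sub
        (Finset.subset_sdiff.2 ⟨Finset.union_subset hZ hYS, by simp [hv, hvZ]⟩)
        (by simp)
    rw [Finset.sdiff_union_of_subset (Finset.singleton_subset_iff.2 hvS)] at hgain
    calc ∑ w ∈ insert v Y, (f S - f (S \ {w}))
        = (f S - f (S \ {v})) + ∑ w ∈ Y, (f S - f (S \ {w})) := Finset.sum_insert hv
      _ ≤ (f (Z ∪ Y ∪ {v}) - f (Z ∪ Y)) + (f (Z ∪ Y) - f Z) := add_le_add hgain (ih hYS hYZ)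
      _ = f (Z ∪ insert v Y) - f Z := by
          rw [sub_add_sub_cancel, Finset.union_assoc, Finset.union_comm Y, Finset.insert_eq]

end IsSubmodular

theorem disjoint_marginal_gain_curvature_general {V R M : Type*} [DecidableEq V]
    [Ring R] [PartialOrder R] [IsOrderedAddMonoid R]
    [AddCommGroup M] [PartialOrder M] [IsOrderedAddMonoid M] [Module R M] [PosSMulMono R M]
    {f : Finset V → M} (hf : IsSubmodular f) (hf₀ : f ∅ = 0) {S : Finset V} {k : R} (hk : k ≤ 1)
    (hcurv : IsCurvatureBound f S k) {Y Z : Finset V} (hY : Y ⊆ S) (hZ : Z ⊆ S)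
    (hYZ : Disjoint Y Z) :
    (1 - k) • f Y ≤ f (Z ∪ Y) - f Z :=
  calc (1 - k) • f Y
      ≤ (1 - k) • ∑ v ∈ Y, f {v} :=
        smul_le_smul_of_nonneg_left (hf.map_le_sum_map_singleton hf₀ Y) (sub_nonneg.2 hk)
    _ = ∑ v ∈ Y, (1 - k) • f {v} := Finset.smul_sum
    _ ≤ ∑ v ∈ Y, (f S - f (S \ {v})) := Finset.sum_le_sum fun v hv ↦ hcurv v (hY hv)
    _ ≤ f (Z ∪ Y) - f Z := hf.sum_map_sub_map_sdiff_singleton_le hY hZ hYZ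

/-- For disjoint `Y`, `Z`, the marginal gain satisfies
`f(Z ∪ Y) - f(Z) ≥ (1 - k_f)·f(Y)`. -/
theorem disjoint_marginal_gain_curvature
    {V : Type*} [Fintype V] [DecidableEq V]
    (f : Finset V → ℝ)
    (hf0 : f ∅ = 0)
    (hfmono : ∀ A B : Finset V, A ⊆ B → f A ≤ f B)
    (hfsub : ∀ A B : Finset V, f A + f B ≥ f (A ∪ B) + f (A ∩ B))
    (kf : ℝ) (hkf0 : 0 ≤ kf) (hkf1 : kf ≤ 1)
    (hcurv : ∀ v : V, f Finset.univ - f (Finset.univ \ {v}) ≥ (1 - kf) * f {v}) :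
    ∀ Y Z : Finset V, Disjoint Y Z → f (Z ∪ Y) - f Z ≥ (1 - kf) * f Y :=
  fun Y Z hYZ ↦ disjoint_marginal_gain_curvature_general hfsub hf0 hkf1 (fun v _ ↦ hcurv v)
    (Finset.subset_univ Y) (Finset.subset_univ Z) hYZ
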